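/- Assume the vertex c is controllable and let 𝒯_i be an equivalence class of neighbors of c such that 𝒯_i ⊆ D^d. Then ∑_{v∈𝒯_i} ∂_{p_v} ∈ 𝓜 and ∑_{v∈𝒯_i} x_v ∂_{p_v} ∈ 𝓜. -/

import Mathlib

/-!
Since `∂_{q_c} ∈ 𝓜` and `∂_{p_c} ∈ 𝓜`, the bracket `[∂_{q_c}, X₀]` minus its `∂_{p_c}`-part shows
that `∑_{v∈𝒯} f̃_v(x_v) ∂_{p_v} ∈ 𝓜` (`famMem_nbrFam`). Let `N` be the set of families
`g = (g_v)` of real polynomials with `g_c = 0` and `∑_v g_v(x_v) ∂_{p_v} ∈ 𝓜`. It is a vector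
space, it is stable under `g ↦ g'` (bracket with `∂_{q_c}`), and the identity
`[∑ h_v(x_v) ∂_{p_v}, [∑ g_v(x_v) ∂_{p_v}, X₀]] = ∑ (g_v h_v)'(x_v) ∂_{p_v}` (`lieB_lieB`)
makes it stable under `(g, h) ↦ (g h)'`. The rest is algebra in `N` (`DerClosed.class_mem`).

The functions `α` on the vertices with `α t ∈ N` form an algebra, because `(α t · β t)' = 2 α β t`;
hence indicators of sets of vertices are obtained by separation (`indicator_of_separating`).
Let `b_v` be the coefficient of degree `d` of `f̃_v`. The `(d-1)`-st derivative of `f̃` is a multiple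
of `b t + e`, where `b e = 0` because the `f̃_v` are adjusted. Therefore `b² t` and `b³ t` are in
`N`, and so is `1_S t` for `S = {v : b_v = b_{v₀}}`. The operator `g ↦ (1_S t g)'` restricts to
`S` and multiplies the coefficient of `t^k` by `k + 1`, so `N` contains the homogeneous
parts `1_S a_k t^k` of `f̃` on `S`. For `k ≥ 1` differentiation gives `1_S a_k t ∈ N`. For `k = 0`,
either `d = 1` and `a_0 = 0` on `S`, or `d ≥ 2` and the product with `1_S t^d` followed by
differentiation gives `1_S a_0 t ∈ N`. These functions separate `v₀` from every vertex of `S`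
with another adjusted polynomial, which yields `1_{𝒯_i} t ∈ N` and, after one more derivative,
`1_{𝒯_i} ∈ N`.
-/

open scoped Classical
open Polynomial

noncomputable section

/-- Phase space ℝ^{2|V|}: positions `q = x.1` and momenta `p = x.2`. -/
abbrev Phase (V : Type) := (V → ℝ) × (V → ℝ)

/-- Lie bracket of vector fields: `[Y,Z](x) = DZ(x)·Y(x) − DY(x)·Z(x)`. -/
def lieB {V : Type} [Fintype V] (Y Z : Phase V → Phase V) : Phase V → Phase V :=
  fun x => fderiv ℝ Z x (Y x) - fderiv ℝ Y x (Z x)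

/-- The constant vector field `∂_{p_v}`. -/
def dp {V : Type} [Fintype V] [DecidableEq V] (v : V) : Phase V → Phase V :=
  fun _ => (0, Pi.single v 1)

/-- The constant vector field `∂_{q_v}`. -/
def dq {V : Type} [Fintype V] [DecidableEq V] (v : V) : Phase V → Phase V :=
  fun _ => (Pi.single v 1, 0)

/-- The constant vector field `∑_{v ∈ A} ∂_{p_v}`. -/
def dpSum {V : Type} [Fintype V] [DecidableEq V] (A : Finset V) : Phase V → Phase V :=
  fun _ => (0, ∑ v ∈ A, Pi.single v 1)

/-- The constant vector field `∑_{v ∈ A} ∂_{q_v}`. -/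
def dqSum {V : Type} [Fintype V] [DecidableEq V] (A : Finset V) : Phase V → Phase V :=
  fun _ => (∑ v ∈ A, Pi.single v 1, 0)

/-- The drift vector field
`X₀ = −∑_{v∈V*} γ_v p_v ∂_{p_v} + ∑_{v∈V} (p_v ∂_{q_v} − U_v'(q_v) ∂_{p_v})
      − ∑_{{u,v}∈E} V_{uv}'(q_u − q_v)(∂_{p_u} − ∂_{p_v})`,
written componentwise (using the symmetry `V_{vu}(x) = V_{uv}(−x)` of the
interaction potentials, the `∂_{p_v}`-component of the edge term at a vertex `v` is
`−∑_{w ~ v} V_{vw}'(q_v − q_w)`). -/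
def X0 {V : Type} [Fintype V] [DecidableEq V] (G : SimpleGraph V) [DecidableRel G.Adj]
    (γ : V → ℝ) (U : V → ℝ → ℝ) (Vp : V → V → Polynomial ℝ) : Phase V → Phase V :=
  fun x =>
    (x.2, fun v =>
      -(γ v) * x.2 v - deriv (U v) (x.1 v) -
        ∑ w ∈ Finset.univ.filter (fun w => G.Adj v w),
          (derivative (Vp v w)).eval (x.1 v - x.1 w))

/-- The smallest collection `𝓜` of vector fields on `ℝ^{2|V|}` that contains `∂_{p_v}`
for every `v ∈ V*`, and is closed under linear combinations, Lie brackets,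
bracketing with `X₀`, and multiplication by smooth scalar functions. -/
inductive MM {V : Type} [Fintype V] [DecidableEq V] (Vstar : Finset V)
    (X₀ : Phase V → Phase V) : (Phase V → Phase V) → Prop
  | basic (v : V) (hv : v ∈ Vstar) : MM Vstar X₀ (dp v)
  | add {Y Z : Phase V → Phase V} : MM Vstar X₀ Y → MM Vstar X₀ Z → MM Vstar X₀ (Y + Z)
  | smul (a : ℝ) {Y : Phase V → Phase V} : MM Vstar X₀ Y → MM Vstar X₀ (a • Y)
  | lie {Y Z : Phase V → Phase V} : MM Vstar X₀ Y → MM Vstar X₀ Z → MM Vstar X₀ (lieB Y Z)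
  | lieX {Y : Phase V → Phase V} : MM Vstar X₀ Y → MM Vstar X₀ (lieB Y X₀)
  | mulS (f : Phase V → ℝ) (hf : ContDiff ℝ (⊤ : ℕ∞) f) {Y : Phase V → Phase V} :
      MM Vstar X₀ Y → MM Vstar X₀ (fun x => f x • Y x)

/-- A vertex `v` is controllable if `∂_{q_v} ∈ 𝓜` and `∂_{p_v} ∈ 𝓜`. -/
def Controllable {V : Type} [Fintype V] [DecidableEq V] (Vstar : Finset V)
    (X₀ : Phase V → Phase V) (v : V) : Prop :=
  MM Vstar X₀ (dq v) ∧ MM Vstar X₀ (dp v)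

/-- Two polynomials are equivalent if `f(·) = g(· + δ)` for some `δ ∈ ℝ`. -/
def PolyEquiv (f g : Polynomial ℝ) : Prop :=
  ∃ δ : ℝ, ∀ x : ℝ, f.eval x = g.eval (x + δ)

/-- The set 𝒯 of neighbors ("targets") of a vertex `c`. -/
def Tset {V : Type} [Fintype V] [DecidableEq V] (G : SimpleGraph V) [DecidableRel G.Adj]
    (c : V) : Finset V :=
  Finset.univ.filter fun w => G.Adj c w

/-- The shift making a polynomial `g = ∑ a_i t^i/i!` of degree `k` adjusted
(i.e. killing the coefficient `a_{k−1}`), namely `a_{k−1}/a_k = coeff_{k−1}/(k·coeff_k)`. -/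
def adjShift (g : Polynomial ℝ) : ℝ :=
  g.coeff (g.natDegree - 1) / ((g.natDegree : ℝ) * g.leadingCoeff)

/-- The adjusted representation `g̃(·) = g(· − a_{k−1}/a_k)` of a polynomial `g`. -/
def adjRep (g : Polynomial ℝ) : Polynomial ℝ :=
  g.comp (Polynomial.X - Polynomial.C (adjShift g))

/-- `f̃_v`, the adjusted representation of `V''_{cv}`. -/
def ft {V : Type} (Vp : V → V → Polynomial ℝ) (c v : V) : Polynomial ℝ :=
  adjRep (derivative (derivative (Vp c v)))

/-- `d = max_{v∈𝒯} d_v`, the maximal degree of the adjusted polynomials `f̃_v`, `v ∈ 𝒯`. -/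
def dmax {V : Type} [Fintype V] [DecidableEq V] (G : SimpleGraph V) [DecidableRel G.Adj]
    (Vp : V → V → Polynomial ℝ) (c : V) : ℕ :=
  (Tset G c).sup fun v => (ft Vp c v).natDegree

/-- `D^d = {v ∈ 𝒯 : d_v = d}`, the neighbors of `c` of maximal adjusted degree. -/
def Dd {V : Type} [Fintype V] [DecidableEq V] (G : SimpleGraph V) [DecidableRel G.Adj]
    (Vp : V → V → Polynomial ℝ) (c : V) : Finset V :=
  (Tset G c).filter fun v => (ft Vp c v).natDegree = dmax G Vp c

/-- The coefficient `b_{vℓ}` in `f̃_v(x) = ∑_j b_{vj} x^j/j!`, i.e. `b_{vℓ} = ℓ!·coeff_ℓ(f̃_v)`. -/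
def bcoef {V : Type} (Vp : V → V → Polynomial ℝ) (c v : V) (ℓ : ℕ) : ℝ :=
  (Nat.factorial ℓ : ℝ) * (ft Vp c v).coeff ℓ

/-- The scalar function `x_v = q_c − q_v + δ_{cv}`, with `δ_{cv}` the adjusting shift
of `V''_{cv}`. -/
def xv {V : Type} [Fintype V] (Vp : V → V → Polynomial ℝ) (c v : V) : Phase V → ℝ :=
  fun x => x.1 c - x.1 v + adjShift (derivative (derivative (Vp c v)))

/-! ### Polynomial families closed under the derivative of the product -/

/-- The closure properties of a set `N` of polynomial families `g : V → ℝ[X]` that drive the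
algebraic part of the argument: `N` is a real vector space, stable under differentiation and
under `(g, h) ↦ (g h)'`, both taken vertex by vertex. -/
structure DerClosed {V : Type} (N : (V → ℝ[X]) → Prop) : Prop where
  add : ∀ {g h}, N g → N h → N (g + h)
  smul : ∀ (a : ℝ) {g}, N g → N (a • g)
  der : ∀ {g}, N g → N (fun v => derivative (g v))
  mulDer : ∀ {g h}, N g → N h → N (fun v => derivative (g v * h v))

/-- The family `α_v t^k`. -/
def monoFam {V : Type} (k : ℕ) (α : V → ℝ) : V → ℝ[X] := fun v => monomial k (α v)

/-- A set of functions closed under linear combinations and products contains the indicator of `C`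
as soon as its members constant on `C` include one that is nonzero on `C` and, for each `w ∉ C`,
one that separates `w` from `C`. -/
lemma indicator_of_separating {V : Type} [Fintype V] (A : (V → ℝ) → Prop)
    (hadd : ∀ {α β}, A α → A β → A (α + β)) (hsmul : ∀ (a : ℝ) {α}, A α → A (a • α))
    (hmul : ∀ {α β}, A α → A β → A (α * β)) (C : Finset V) (v₀ : V)
    (α₁ : V → ℝ) (h₁ : A α₁) (h₁0 : α₁ v₀ ≠ 0) (h₁C : ∀ v ∈ C, α₁ v = α₁ v₀)
    (hsep : ∀ w ∉ C, ∃ α, A α ∧ (∀ v ∈ C, α v = α v₀) ∧ α w ≠ α v₀) :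
    A (fun v => if v ∈ C then 1 else 0) := by
  have key : ∀ s : Finset V, (∀ w ∈ s, w ∉ C) →
      ∃ α, A α ∧ (∀ v ∈ C, α v = α v₀) ∧ α v₀ ≠ 0 ∧ ∀ w ∈ s, α w = 0 := by
    intro s
    induction s using Finset.induction_on with
    | empty => exact fun _ => ⟨α₁, h₁, h₁C, h₁0, by simp⟩
    | insert w s hw ih =>
      intro hs
      obtain ⟨α, hα, hαC, hα0, hαs⟩ := ih fun u hu => hs u (Finset.mem_insert_of_mem hu)
      obtain ⟨β, hβ, hβC, hβw⟩ := hsep w (hs w (Finset.mem_insert_self _ _))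
      -- `α (β - β w)` vanishes at `w` in addition to `s`.
      refine ⟨α * β + (-(β w)) • α, hadd (hmul hα hβ) (hsmul _ hα), ?_, ?_, ?_⟩
      · intro v hv
        simp [hαC v hv, hβC v hv]
      · have : α v₀ * (β v₀ - β w) ≠ 0 := mul_ne_zero hα0 (sub_ne_zero.2 hβw.symm)
        simp only [Pi.add_apply, Pi.mul_apply, Pi.smul_apply, smul_eq_mul]
        intro h
        apply this
        linarith
      · intro u hu
        simp only [Pi.add_apply, Pi.mul_apply, Pi.smul_apply, smul_eq_mul]
        rcases Finset.mem_insert.1 hu with rfl | hu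
        · ring
        · simp [hαs u hu]
  obtain ⟨α, hα, hαC, hα0, hαs⟩ := key (Finset.univ.filter fun w => w ∉ C) (by simp)
  convert hsmul (α v₀)⁻¹ hα using 1
  funext v
  by_cases hv : v ∈ C
  · simp [hv, hαC v hv, hα0]
  · simp [hv, hαs v (by simp [hv])]

namespace DerClosed

variable {V : Type} {N : (V → ℝ[X]) → Prop}

lemma congr_fam {g h : V → ℝ[X]} (hg : N g) (e : ∀ v, g v = h v) : N h := by
  rwa [← funext e]

lemma iterDer (hN : DerClosed N) {g : V → ℝ[X]} (hg : N g) (k : ℕ) :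
    N (fun v => derivative^[k] (g v)) := by
  induction k with
  | zero => exact hg
  | succ k ih => simpa only [Function.iterate_succ_apply'] using hN.der ih

lemma monoFam_smul (hN : DerClosed N) {k : ℕ} {α : V → ℝ} (a : ℝ) (h : N (monoFam k α)) :
    N (monoFam k (a • α)) :=
  congr_fam (hN.smul a h) fun v => by simp [monoFam, smul_monomial]

lemma monoFam_add (hN : DerClosed N) {k : ℕ} {α β : V → ℝ} (h : N (monoFam k α))
    (h' : N (monoFam k β)) : N (monoFam k (α + β)) :=
  congr_fam (hN.add h h') fun v => by simp [monoFam]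

lemma monoFam_pred (hN : DerClosed N) {k : ℕ} {α : V → ℝ} (h : N (monoFam (k + 1) α)) :
    N (monoFam k α) := by
  have h2 := hN.smul ((k : ℝ) + 1)⁻¹ (hN.der h)
  refine congr_fam h2 fun v => ?_
  have : (k : ℝ) + 1 ≠ 0 := by positivity
  simp only [Pi.smul_apply, monoFam, derivative_monomial, smul_monomial, smul_eq_mul]
  push_cast
  congr 1
  field_simp

lemma monoFam_one (hN : DerClosed N) {k : ℕ} {α : V → ℝ} (h : N (monoFam (k + 1) α)) :
    N (monoFam 1 α) := by
  induction k with
  | zero => exact h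
  | succ k ih => exact ih (hN.monoFam_pred h)

/-- Since `(α t^k · β t^(l+1))' = (k + l + 1) α β t^(k+l)`. -/
lemma monoFam_mul (hN : DerClosed N) {k l : ℕ} {α β : V → ℝ} (h : N (monoFam k α))
    (h' : N (monoFam (l + 1) β)) : N (monoFam (k + l) (α * β)) := by
  have h2 := hN.smul ((k : ℝ) + l + 1)⁻¹ (hN.mulDer h h')
  refine congr_fam h2 fun v => ?_
  have : (k : ℝ) + l + 1 ≠ 0 := by positivity
  simp only [Pi.smul_apply, monoFam, monomial_mul_monomial, derivative_monomial, smul_monomial,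
    smul_eq_mul, Pi.mul_apply]
  push_cast
  congr 1
  field_simp
  ring

/-- The functions `α` with `(α_v t)_v ∈ N` satisfy the hypotheses of
`indicator_of_separating`, since `(α t · β t)' = 2 α β t`. -/
lemma indicator_mem [Fintype V] (hN : DerClosed N) (C : Finset V) (v₀ : V)
    (α₁ : V → ℝ) (h₁ : N (monoFam 1 α₁)) (h₁0 : α₁ v₀ ≠ 0) (h₁C : ∀ v ∈ C, α₁ v = α₁ v₀)
    (hsep : ∀ w ∉ C, ∃ α, N (monoFam 1 α) ∧ (∀ v ∈ C, α v = α v₀) ∧ α w ≠ α v₀) :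
    N (monoFam 1 (fun v => if v ∈ C then 1 else 0)) :=
  indicator_of_separating (fun α => N (monoFam 1 α)) hN.monoFam_add
    (fun a _ h => hN.monoFam_smul a h)
    (fun h h' => hN.monoFam_mul (l := 0) h h') C v₀ α₁ h₁ h₁0 h₁C hsep

/-- With `1_S t` available, `g ↦ (1_S t g)'` multiplies the coefficient of `t^j` on `S` by `j + 1`.
Subtracting multiples of the identity kills the coefficients of any finite set `s` of degrees
while keeping the one of degree `k ∉ s`. -/
lemma exists_filtered (hN : DerClosed N) {F : V → ℝ[X]} (hF : N F) {χ : V → ℝ}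
    (hχ : ∀ v, χ v * χ v = χ v) (hχN : N (monoFam 1 χ)) (k : ℕ) (s : Finset ℕ) (hk : k ∉ s) :
    ∃ m : ℕ → ℝ, m k ≠ 0 ∧ (∀ j ∈ s, m j = 0) ∧
      ∃ h, N h ∧ ∀ v j, (h v).coeff j = χ v * m j * (F v).coeff j := by
  have hT : ∀ g : V → ℝ[X], N g → ∃ h, N h ∧
      ∀ v j, (h v).coeff j = χ v * (j + 1) * (g v).coeff j := by
    intro g hg
    refine ⟨_, hN.mulDer hχN hg, fun v j => ?_⟩
    rw [coeff_derivative, monoFam, ← C_mul_X_eq_monomial, mul_assoc, coeff_C_mul, coeff_X_mul]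
    ring
  induction s using Finset.induction_on with
  | empty =>
    obtain ⟨h, hh, hc⟩ := hT F hF
    exact ⟨fun j => j + 1, by positivity, by simp, h, hh, hc⟩
  | insert i s hi ih =>
    obtain ⟨m, hmk, hms, h, hh, hc⟩ := ih fun h' => hk (Finset.mem_insert_of_mem h')
    obtain ⟨h', hh', hc'⟩ := hT h hh
    have hki : k ≠ i := fun e => hk (by simp [e])
    refine ⟨fun j => ((j : ℝ) - i) * m j, mul_ne_zero (sub_ne_zero.2 (by exact_mod_cast hki)) hmk,
      ?_, h' + (-((i : ℝ) + 1)) • h, hN.add hh' (hN.smul _ hh), ?_⟩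
    · intro j hj
      rcases Finset.mem_insert.1 hj with rfl | hj
      · simp
      · simp [hms j hj]
    · intro v j
      simp only [Pi.add_apply, Pi.smul_apply, coeff_add, coeff_smul, hc', hc, smul_eq_mul]
      linear_combination ((j : ℝ) + 1) * m j * (F v).coeff j * hχ v

/-- The degree-`k` parts of `F` on the set with indicator `χ` form a family in `N`. -/
lemma monoFam_coeff (hN : DerClosed N) {F : V → ℝ[X]} (hF : N F) {d : ℕ}
    (hd : ∀ v, (F v).natDegree ≤ d) {χ : V → ℝ}
    (hχ : ∀ v, χ v * χ v = χ v) (hχN : N (monoFam 1 χ)) (k : ℕ) :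
    N (monoFam k (fun v => χ v * (F v).coeff k)) := by
  obtain ⟨m, hmk, hms, h, hh, hc⟩ :=
    hN.exists_filtered hF hχ hχN k ((Finset.range (d + 1)).erase k) (by simp)
  refine congr_fam (hN.smul (m k)⁻¹ hh) fun v => ?_
  ext j
  rw [Pi.smul_apply, coeff_smul, hc, monoFam, coeff_monomial, smul_eq_mul]
  split_ifs with hkj
  · subst hkj
    field_simp
  · by_cases hj : j ≤ d
    · rw [hms j (by simp [Ne.symm hkj]; omega)]
      simp
    · rw [coeff_eq_zero_of_natDegree_lt ((hd v).trans_lt (by omega))]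
      simp

/-- The algebraic core: if `F ∈ N` has degrees at most `d`, its members of degree exactly `d` are
adjusted, and `F v₀` has degree `d`, then `N` contains the family `1_C t`, where `C` is the
set of vertices `v` with `F v = F v₀`. -/
lemma class_mem [Fintype V] (hN : DerClosed N) {F : V → ℝ[X]} (hF : N F) {d : ℕ}
    (hd : ∀ v, (F v).natDegree ≤ d + 1)
    (hadj : ∀ v, (F v).coeff (d + 1) ≠ 0 → (F v).coeff d = 0)
    (v₀ : V) (hv₀ : (F v₀).coeff (d + 1) ≠ 0)
    (C : Finset V) (hC : ∀ v, v ∈ C ↔ F v = F v₀) :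
    N (monoFam 1 (fun v => if v ∈ C then 1 else 0)) := by
  set b : V → ℝ := fun v => (F v).coeff (d + 1) with hb
  -- The `d`-th derivative of `F` is `b t + e` up to a constant, with `b e = 0`.
  obtain ⟨e, hbe, hg⟩ : ∃ e : V → ℝ, (∀ v, b v * e v = 0) ∧ N (monoFam 1 b + monoFam 0 e) := by
    refine ⟨fun v => ((d + 1).factorial : ℝ)⁻¹ * (d.factorial * (F v).coeff d), fun v => ?_, ?_⟩
    · by_cases h : b v = 0
      · simp [h]
      · simp [hadj v h]
    · refine congr_fam (hN.smul ((d + 1).factorial : ℝ)⁻¹ (hN.iterDer hF d)) fun v => ?_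
      ext j
      have hf : ((d + 1).factorial : ℝ) ≠ 0 := by positivity
      simp only [Pi.smul_apply, coeff_smul, Pi.add_apply, coeff_add, monoFam, coeff_monomial,
        coeff_iterate_derivative, smul_eq_mul, nsmul_eq_mul]
      rcases j with _ | _ | j
      · simp [Nat.descFactorial_self]
      · have : (0 + 1 + d).descFactorial d = (d + 1).factorial := by
          rw [show 0 + 1 + d = d + 1 by ring]
          have := Nat.factorial_mul_descFactorial (show d ≤ d + 1 by omega)
          simpa using this
        rw [this]
        simp only [hb]
        rw [show 0 + 1 + d = d + 1 by ring]
        field_simp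
        simp
      · rw [coeff_eq_zero_of_natDegree_lt ((hd v).trans_lt (by omega))]
        simp
  have hb2 : N (monoFam 1 (b * b)) := by
    refine congr_fam (hN.smul 2⁻¹ (hN.mulDer hg hg)) fun v => ?_
    have h2 : ((monoFam 1 b + monoFam 0 e) v * (monoFam 1 b + monoFam 0 e) v)
        = monomial 2 (b v * b v) + monomial 0 (e v * e v) := by
      simp only [Pi.add_apply, monoFam, add_mul, mul_add, monomial_mul_monomial, hbe,
        mul_comm (e v) (b v)]
      simp
    rw [Pi.smul_apply, h2]
    simp only [derivative_add, derivative_monomial, smul_monomial, monoFam,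
      Pi.mul_apply, smul_eq_mul, Nat.cast_zero, mul_zero, map_zero, add_zero]
    congr 1
    push_cast
    ring
  have hb3 : N (monoFam 1 (b * b * b)) := by
    refine congr_fam (hN.smul 2⁻¹ (hN.mulDer hb2 hg)) fun v => ?_
    have h2 : (monoFam 1 (b * b) v * (monoFam 1 b + monoFam 0 e) v)
        = monomial 2 (b v * b v * b v) := by
      simp only [Pi.add_apply, Pi.mul_apply, monoFam, mul_add, monomial_mul_monomial,
        mul_assoc, hbe]
      simp
    rw [Pi.smul_apply, h2]
    simp only [derivative_monomial, smul_monomial, monoFam, Pi.mul_apply, smul_eq_mul]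
    congr 1
    push_cast
    ring
  set S : Finset V := Finset.univ.filter fun v => b v = b v₀ with hS
  have hSN : N (monoFam 1 (fun v => if v ∈ S then 1 else 0)) := by
    refine hN.indicator_mem S v₀ (b * b) hb2 (mul_ne_zero hv₀ hv₀) ?_ ?_
    · intro v hv
      simp [(Finset.mem_filter.1 hv).2]
    · intro w hw
      have hw' : b w ≠ b v₀ := by simpa [hS] using hw
      -- A real number is determined by its square and its cube.
      by_cases h2 : b w * b w = b v₀ * b v₀
      · refine ⟨b * b * b, hb3, fun v hv => by simp [(Finset.mem_filter.1 hv).2], ?_⟩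
        intro h3
        simp only [Pi.mul_apply, h2] at h3
        exact hw' (mul_left_cancel₀ (mul_ne_zero hv₀ hv₀) h3)
      · exact ⟨b * b, hb2, fun v hv => by simp [(Finset.mem_filter.1 hv).2], h2⟩
  set χ : V → ℝ := fun v => if v ∈ S then 1 else 0 with hχdef
  have hχ : ∀ v, χ v * χ v = χ v := fun v => by simp [hχdef]
  have hv₀S : v₀ ∈ S := by simp [hS]
  have hχv₀ : χ v₀ = 1 := by simp [hχdef, hv₀S]
  have hχC : ∀ v ∈ C, χ v = χ v₀ := fun v hv => by
    have : v ∈ S := by simp [hS, hb, (hC v).1 hv]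
    simp [hχdef, this, hv₀S]
  refine hN.indicator_mem C v₀ χ hSN (by simp [hχv₀]) hχC ?_
  intro w hw
  by_cases hwS : w ∈ S
  swap
  · exact ⟨χ, hSN, hχC, by simp [hχv₀]; simp [hχdef, hwS]⟩
  have hwb : b w = b v₀ := by simpa [hS] using hwS
  have hFw : F w ≠ F v₀ := fun h => hw ((hC w).2 h)
  obtain ⟨k, hk⟩ : ∃ k, (F w).coeff k ≠ (F v₀).coeff k := by
    by_contra! h
    exact hFw (Polynomial.ext h)
  refine ⟨fun v => χ v * (F v).coeff k, ?_, fun v hv => by simp [hχC v hv, (hC v).1 hv], ?_⟩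
  swap
  · simpa [hχdef, hwS, hv₀S] using hk
  have hkN := hN.monoFam_coeff hF hd hχ hSN k
  rcases k with _ | k
  · rcases d with _ | d
    · -- For linear `F w` and `F v₀` both constant coefficients vanish, being adjusted.
      exact absurd ((hadj w (by rw [show (F w).coeff (0 + 1) = b w from rfl, hwb]; exact hv₀)).trans
        (hadj v₀ hv₀).symm) hk
    · -- On `S` the leading coefficient is constant, so `1_S t^(d+2)` is available.
      have htop := hN.monoFam_coeff hF hd hχ hSN (d + 1 + 1)
      have hprod := hN.monoFam_smul (b v₀)⁻¹ (hN.monoFam_mul (k := 0) hkN (l := d + 1) htop)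
      rw [zero_add] at hprod
      convert hN.monoFam_one hprod using 2
      funext v
      by_cases hv : v ∈ S
      · have : (F v).coeff (d + 1 + 1) = b v₀ := (Finset.mem_filter.1 hv).2
        simp only [hχdef, hv, Pi.smul_apply, Pi.mul_apply, this, smul_eq_mul, if_true]
        have : b v₀ ≠ 0 := hv₀
        field_simp
      · simp [hχdef, hv]
  · exact hN.monoFam_one hkN

end DerClosed

/-! ### Adjusted representations -/

lemma coeff_pred_taylor (g : ℝ[X]) (hg : 1 ≤ g.natDegree) (r : ℝ) :
    (g.comp (X + C r)).coeff (g.natDegree - 1) =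
      g.coeff (g.natDegree - 1) + g.natDegree * g.leadingCoeff * r := by
  obtain ⟨n, hn⟩ : ∃ n, g.natDegree = n + 1 := ⟨g.natDegree - 1, by omega⟩
  have h1 : (hasseDeriv n g).natDegree ≤ 1 := by
    rw [natDegree_le_iff_coeff_eq_zero]
    intro N hN
    rw [hasseDeriv_coeff, coeff_eq_zero_of_natDegree_lt (by omega), mul_zero]
  have h2 : (g.comp (X + C r)) = taylor r g := rfl
  rw [h2, hn, Nat.add_sub_cancel, taylor_coeff, eval_eq_sum_range' (Nat.lt_succ_of_le h1)]
  simp only [Finset.sum_range_succ, Finset.sum_range_zero, hasseDeriv_coeff, leadingCoeff, hn]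
  have h3 : (1 + n).choose n = n + 1 := by rw [add_comm, Nat.choose_succ_self_right]
  rw [h3, add_comm 1 n]
  simp

lemma natDegree_adjRep (g : ℝ[X]) : (adjRep g).natDegree = g.natDegree := by
  rw [adjRep, natDegree_comp, natDegree_X_sub_C, mul_one]

lemma coeff_pred_adjRep (g : ℝ[X]) (hg : 1 ≤ g.natDegree) :
    (adjRep g).coeff (g.natDegree - 1) = 0 := by
  have h := coeff_pred_taylor g hg (-adjShift g)
  rw [adjRep, sub_eq_add_neg, ← C_neg, h, adjShift]
  have h1 : (g.natDegree : ℝ) ≠ 0 := by exact_mod_cast (by omega : g.natDegree ≠ 0)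
  have h2 : g.leadingCoeff ≠ 0 := by
    rw [leadingCoeff_ne_zero]
    rintro rfl
    simp at hg
  field_simp
  ring

lemma eval_adjRep (g : ℝ[X]) (x : ℝ) : (adjRep g).eval (x + adjShift g) = g.eval x := by
  simp [adjRep]

/-- Equivalence up to translation is equality of adjusted representations. -/
lemma polyEquiv_iff (f g : ℝ[X]) (hg : 1 ≤ g.natDegree) :
    PolyEquiv f g ↔ adjRep f = adjRep g := by
  constructor
  · rintro ⟨δ, h⟩
    have hf : f = g.comp (X + C δ) := Polynomial.funext fun x => by simp [h]
    have hdeg : f.natDegree = g.natDegree := by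
      rw [hf, natDegree_comp, natDegree_X_add_C, mul_one]
    have hlc : f.leadingCoeff = g.leadingCoeff := by
      rw [hf, leadingCoeff_comp (by simp)]
      simp
    have h1 : (g.natDegree : ℝ) ≠ 0 := by exact_mod_cast (by omega : g.natDegree ≠ 0)
    have h2 : g.leadingCoeff ≠ 0 := by
      rw [leadingCoeff_ne_zero]
      rintro rfl
      simp at hg
    have hs : adjShift f = adjShift g + δ := by
      have := coeff_pred_taylor g hg δ
      rw [← hf] at this
      rw [adjShift, adjShift, hdeg, hlc, this]
      field_simp
    refine Polynomial.funext fun x => ?_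
    simp only [adjRep, eval_comp, h, hs, eval_sub, eval_X, eval_C]
    congr 1
    ring
  · intro h
    refine ⟨adjShift f - adjShift g, fun x => ?_⟩
    rw [← eval_adjRep f, ← eval_adjRep g, h]
    congr 1
    ring

/-! ### Vector fields attached to polynomial families -/

section Fields

variable {V : Type} [Fintype V]

/-- The vector field `∑_v g_v(x_v) ∂_{p_v}`. -/
def famField (Vp : V → V → ℝ[X]) (c : V) (g : V → ℝ[X]) : Phase V → Phase V :=
  fun x => (0, fun v => (g v).eval (xv Vp c v x))

/-- The families `g` without component at `c` for which `∑_v g_v(x_v) ∂_{p_v} ∈ 𝓜`. -/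
def FamMem [DecidableEq V] (Vstar : Finset V) (X₀ : Phase V → Phase V) (Vp : V → V → ℝ[X]) (c : V)
    (g : V → ℝ[X]) : Prop :=
  g c = 0 ∧ MM Vstar X₀ (famField Vp c g)

lemma hasFDerivAt_xv (Vp : V → V → ℝ[X]) (c v : V) (x : Phase V) :
    HasFDerivAt (xv Vp c v)
      (((ContinuousLinearMap.proj c : (V → ℝ) →L[ℝ] ℝ) -
        (ContinuousLinearMap.proj v : (V → ℝ) →L[ℝ] ℝ)).comp
          (ContinuousLinearMap.fst ℝ (V → ℝ) (V → ℝ))) x :=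
  (((ContinuousLinearMap.proj c : (V → ℝ) →L[ℝ] ℝ) -
    (ContinuousLinearMap.proj v : (V → ℝ) →L[ℝ] ℝ)).comp
      (ContinuousLinearMap.fst ℝ (V → ℝ) (V → ℝ))).hasFDerivAt.add_const _

lemma hasFDerivAt_eval_xv (Vp : V → V → ℝ[X]) (c v : V) (g : ℝ[X]) (x : Phase V) :
    HasFDerivAt (fun y => g.eval (xv Vp c v y))
      ((derivative g).eval (xv Vp c v x) • (((ContinuousLinearMap.proj c : (V → ℝ) →L[ℝ] ℝ) -
        (ContinuousLinearMap.proj v : (V → ℝ) →L[ℝ] ℝ)).comp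
          (ContinuousLinearMap.fst ℝ (V → ℝ) (V → ℝ)))) x :=
  (g.hasDerivAt _).comp_hasFDerivAt x (hasFDerivAt_xv Vp c v x)

lemma fderiv_famField (Vp : V → V → ℝ[X]) (c : V) (g : V → ℝ[X]) (x w : Phase V) :
    fderiv ℝ (famField Vp c g) x w =
      (0, fun v => (derivative (g v)).eval (xv Vp c v x) * (w.1 c - w.1 v)) := by
  have h : HasFDerivAt (famField Vp c g) _ x :=
    (hasFDerivAt_const (0 : V → ℝ) x).prodMk
      (hasFDerivAt_pi.2 fun v => hasFDerivAt_eval_xv Vp c v (g v) x)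
  rw [h.fderiv]
  rfl

variable [DecidableEq V]

lemma fderiv_dq (c : V) (x : Phase V) : fderiv ℝ (dq c : Phase V → Phase V) x = 0 := by
  unfold dq
  simp

lemma contDiff_X0 (G : SimpleGraph V) [DecidableRel G.Adj] (γ : V → ℝ) (U : V → ℝ → ℝ)
    (Vp : V → V → ℝ[X]) (hU : ∀ v, ContDiff ℝ (⊤ : ℕ∞) (U v)) :
    ContDiff ℝ (⊤ : ℕ∞) (X0 G γ U Vp) := by
  have hU' : ∀ v, ContDiff ℝ (⊤ : ℕ∞) (deriv (U v)) := fun v =>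
    (contDiff_infty_iff_deriv.1 (hU v)).2
  have hP : ∀ P : ℝ[X], ContDiff ℝ (⊤ : ℕ∞) (fun y => P.eval y) := fun P => by
    simpa using P.contDiff_aeval (𝕜 := ℝ) (⊤ : ℕ∞)
  have hq : ∀ v, ContDiff ℝ (⊤ : ℕ∞) (fun x : Phase V => x.1 v) := fun v => by fun_prop
  have hp : ∀ v, ContDiff ℝ (⊤ : ℕ∞) (fun x : Phase V => x.2 v) := fun v => by fun_prop
  refine contDiff_snd.prodMk (contDiff_pi.2 fun v => ?_)
  refine ((contDiff_const.mul (hp v)).sub ((hU' v).comp (hq v))).sub (ContDiff.sum fun w _ => ?_)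
  exact (hP _).comp ((hq v).sub (hq w))

/-- `X₀` is affine in the momenta. -/
lemma fderiv_X0_momentum (G : SimpleGraph V) [DecidableRel G.Adj] (γ : V → ℝ) (U : V → ℝ → ℝ)
    (Vp : V → V → ℝ[X]) (hU : ∀ v, ContDiff ℝ (⊤ : ℕ∞) (U v)) (x : Phase V) (w : V → ℝ) :
    fderiv ℝ (X0 G γ U Vp) x (0, w) = (w, fun v => -(γ v) * w v) := by
  have hd : DifferentiableAt ℝ (X0 G γ U Vp) x :=
    ((contDiff_X0 G γ U Vp hU).differentiable (by simp)) x
  have h1 := (hd.hasFDerivAt.hasLineDerivAt (0, w)).lineDeriv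
  rw [← h1]
  apply HasLineDerivAt.lineDeriv
  have h2 : ∀ t : ℝ, X0 G γ U Vp (x + t • ((0 : V → ℝ), w)) =
      X0 G γ U Vp x + t • (w, fun v => -(γ v) * w v) := by
    intro t
    ext v
    · simp [X0]
    · simp [X0]
      ring
  unfold HasLineDerivAt
  simp only [h2]
  simpa using ((hasDerivAt_id (0 : ℝ)).smul_const (w, fun v => -(γ v) * w v)).const_add
    (X0 G γ U Vp x)

/-- The force on a neighbor `v ≠ c` depends on `q_c` through the edge `{c, v}` only. -/
lemma fderiv_X0_dq (G : SimpleGraph V) [DecidableRel G.Adj] (γ : V → ℝ) (U : V → ℝ → ℝ)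
    (Vp : V → V → ℝ[X]) (hU : ∀ v, ContDiff ℝ (⊤ : ℕ∞) (U v)) (c : V) (x : Phase V) :
    (fderiv ℝ (X0 G γ U Vp) x (Pi.single c 1, 0)).1 = 0 ∧
    ∀ v, v ≠ c → (fderiv ℝ (X0 G γ U Vp) x (Pi.single c 1, 0)).2 v =
      if G.Adj v c then (derivative (derivative (Vp v c))).eval (x.1 v - x.1 c) else 0 := by
  have hd : DifferentiableAt ℝ (X0 G γ U Vp) x :=
    ((contDiff_X0 G γ U Vp hU).differentiable (by simp)) x
  have h1 : HasDerivAt (fun t : ℝ => X0 G γ U Vp (x + t • ((Pi.single c 1 : V → ℝ), (0 : V → ℝ))))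
    (fderiv ℝ (X0 G γ U Vp) x (Pi.single c 1, 0)) 0 := hd.hasFDerivAt.hasLineDerivAt _
  constructor
  · have h2 := h1.hasFDerivAt.fst.hasDerivAt
    have h3 : HasDerivAt (fun t : ℝ =>
        (X0 G γ U Vp (x + t • ((Pi.single c 1 : V → ℝ), (0 : V → ℝ)))).1) 0 0 := by
      have : (fun t : ℝ =>
        (X0 G γ U Vp (x + t • ((Pi.single c 1 : V → ℝ), (0 : V → ℝ)))).1) = fun _ => x.2 := by
        funext t
        simp [X0]
      rw [this]
      exact hasDerivAt_const _ _
    simpa using h2.unique h3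
  · intro v hv
    have h2 := hasDerivAt_pi.1 h1.hasFDerivAt.snd.hasDerivAt v
    have h3 : HasDerivAt (fun t : ℝ =>
        (X0 G γ U Vp (x + t • ((Pi.single c 1 : V → ℝ), (0 : V → ℝ)))).2 v)
        (if G.Adj v c then (derivative (derivative (Vp v c))).eval (x.1 v - x.1 c) else 0) 0 := by
      have e : (fun t : ℝ =>
        (X0 G γ U Vp (x + t • ((Pi.single c 1 : V → ℝ), (0 : V → ℝ)))).2 v) = fun t =>
          (-(γ v) * x.2 v - deriv (U v) (x.1 v)) -
          ∑ w ∈ Finset.univ.filter (fun w => G.Adj v w),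
            (derivative (Vp v w)).eval (x.1 v - (x.1 w + t * (Pi.single c 1 : V → ℝ) w)) := by
        funext t
        simp [X0, hv]
      rw [e]
      have hw : ∀ w ∈ Finset.univ.filter (fun w => G.Adj v w), HasDerivAt (fun t : ℝ =>
          (derivative (Vp v w)).eval (x.1 v - (x.1 w + t * (Pi.single c 1 : V → ℝ) w)))
          (if w = c then -(derivative (derivative (Vp v c))).eval (x.1 v - x.1 c) else 0) 0 := by
        intro w _
        have ha : HasDerivAt (fun t : ℝ => x.1 v - (x.1 w + t * (Pi.single c 1 : V → ℝ) w))
            (-(Pi.single c 1 : V → ℝ) w) 0 := by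
          simpa using (((hasDerivAt_id (0 : ℝ)).mul_const
            ((Pi.single c 1 : V → ℝ) w)).const_add (x.1 w)).const_sub (x.1 v)
        have hb := ((derivative (Vp v w)).hasDerivAt
          (x.1 v - (x.1 w + 0 * (Pi.single c 1 : V → ℝ) w))).comp 0 ha
        refine hb.congr_deriv ?_
        by_cases hwc : w = c
        · subst hwc
          simp
        · simp [hwc]
      have := (HasDerivAt.fun_sum hw).const_sub (-(γ v) * x.2 v - deriv (U v) (x.1 v))
      refine this.congr_deriv ?_
      rw [Finset.sum_ite_eq']
      by_cases h : G.Adj v c <;> simp [h]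
    simpa using h2.unique h3

variable (G : SimpleGraph V) [DecidableRel G.Adj] (Vstar : Finset V) (γ : V → ℝ) (U : V → ℝ → ℝ)
  (Vp : V → V → ℝ[X]) (c : V)

lemma lieB_famField_X0 (hU : ∀ v, ContDiff ℝ (⊤ : ℕ∞) (U v)) (g : V → ℝ[X]) :
    lieB (famField Vp c g) (X0 G γ U Vp) = fun x =>
      (fun v => (g v).eval (xv Vp c v x), fun v => -(γ v) * (g v).eval (xv Vp c v x) -
        (derivative (g v)).eval (xv Vp c v x) * (x.2 c - x.2 v)) := by
  funext x
  rw [lieB, fderiv_famField]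
  have := fderiv_X0_momentum G γ U Vp hU x (fun v => (g v).eval (xv Vp c v x))
  rw [show famField Vp c g x = (0, fun v => (g v).eval (xv Vp c v x)) from rfl, this]
  ext v <;> simp [X0]

/-- `[∑ h_v(x_v) ∂_{p_v}, [∑ g_v(x_v) ∂_{p_v}, X₀]] = ∑ (g_v h_v)'(x_v) ∂_{p_v}`. -/
lemma lieB_lieB (hU : ∀ v, ContDiff ℝ (⊤ : ℕ∞) (U v)) (g h : V → ℝ[X]) (hg : g c = 0)
    (hh : h c = 0) :
    lieB (famField Vp c h) (lieB (famField Vp c g) (X0 G γ U Vp)) =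
      famField Vp c (fun v => derivative (g v * h v)) := by
  rw [lieB_famField_X0 G γ U Vp c hU]
  funext x
  rw [lieB, fderiv_famField]
  have hp : ∀ v, HasFDerivAt (fun y : Phase V => y.2 v)
      ((ContinuousLinearMap.proj v : (V → ℝ) →L[ℝ] ℝ).comp
        (ContinuousLinearMap.snd ℝ (V → ℝ) (V → ℝ))) x := fun v =>
    ((ContinuousLinearMap.proj v : (V → ℝ) →L[ℝ] ℝ).comp
        (ContinuousLinearMap.snd ℝ (V → ℝ) (V → ℝ))).hasFDerivAt
  have hZ := (hasFDerivAt_pi.2 fun v => hasFDerivAt_eval_xv Vp c v (g v) x).prodMk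
    (hasFDerivAt_pi.2 fun v => ((hasFDerivAt_eval_xv Vp c v (g v) x).const_mul (-(γ v))).sub
      ((hasFDerivAt_eval_xv Vp c v (derivative (g v)) x).mul ((hp c).sub (hp v))))
  erw [hZ.fderiv]
  ext v
  · simp [famField]
  · simp [famField, hg, hh]
    ring

lemma derClosed_famMem (hU : ∀ v, ContDiff ℝ (⊤ : ℕ∞) (U v))
    (hc : Controllable Vstar (X0 G γ U Vp) c) :
    DerClosed (FamMem Vstar (X0 G γ U Vp) Vp c) where
  add := by
    rintro g h ⟨hg, hg'⟩ ⟨hh, hh'⟩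
    refine ⟨by simp [hg, hh], ?_⟩
    convert MM.add hg' hh' using 1
    funext x
    ext v <;> simp [famField]
  smul := by
    rintro a g ⟨hg, hg'⟩
    refine ⟨by simp [hg], ?_⟩
    convert MM.smul a hg' using 1
    funext x
    ext v <;> simp [famField]
  der := by
    rintro g ⟨hg, hg'⟩
    refine ⟨by simp [hg], ?_⟩
    convert MM.smul (-1) (MM.lie hg' hc.1) using 1
    funext x
    rw [Pi.smul_apply, lieB, fderiv_famField, fderiv_dq]
    ext v
    · simp [famField, dq]
    · by_cases hv : v = c
      · subst hv
        simp [famField, dq, hg]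
      · simp [famField, dq, hv]
  mulDer := by
    rintro g h ⟨hg, hg'⟩ ⟨hh, hh'⟩
    refine ⟨by simp [hg], ?_⟩
    rw [← lieB_lieB G γ U Vp c hU g h hg hh]
    exact hh'.lie hg'.lieX

/-- The family `f̃_v` on the neighbors of `c`, extended by zero. -/
def nbrFam : V → ℝ[X] := fun v => if v ∈ Tset G c then ft Vp c v else 0

/-- Up to a multiple of `∂_{p_c}`, the field `∑_{v∈𝒯} f̃_v(x_v) ∂_{p_v}` is `[∂_{q_c}, X₀]`. -/
lemma famMem_nbrFam (hU : ∀ v, ContDiff ℝ (⊤ : ℕ∞) (U v))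
    (hsym : ∀ u v, G.Adj u v → ∀ x : ℝ, (Vp v u).eval x = (Vp u v).eval (-x))
    (hc : Controllable Vstar (X0 G γ U Vp) c) :
    FamMem Vstar (X0 G γ U Vp) Vp c (nbrFam G Vp c) := by
  have hcc : nbrFam G Vp c c = 0 := by simp [nbrFam, Tset]
  refine ⟨hcc, ?_⟩
  have hlie : ∀ x, lieB (dq c) (X0 G γ U Vp) x =
      fderiv ℝ (X0 G γ U Vp) x (Pi.single c 1, 0) := by
    intro x
    rw [lieB, fderiv_dq]
    simp [dq]
  have hsm : ContDiff ℝ (⊤ : ℕ∞) (fun x : Phase V =>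
      -(fderiv ℝ (X0 G γ U Vp) x (Pi.single c 1, 0)).2 c) := by
    have h1 : ContDiff ℝ (⊤ : ℕ∞) (fun x : Phase V =>
        fderiv ℝ (X0 G γ U Vp) x (Pi.single c 1, 0)) :=
      ((contDiff_X0 G γ U Vp hU).fderiv_right (by simp)).clm_apply contDiff_const
    exact ((contDiff_pi.1 h1.snd) c).neg
  convert MM.add (MM.lieX hc.1) (MM.mulS _ hsm hc.2) using 1
  funext x
  obtain ⟨h1, h2⟩ := fderiv_X0_dq G γ U Vp hU c x
  rw [Pi.add_apply, hlie]
  ext v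
  · simp [famField, dp, h1]
  · by_cases hv : v = c
    · subst hv
      simp [famField, dp, hcc]
    · simp only [famField, dp, Prod.snd_add, Pi.add_apply, h2 v hv, Prod.smul_snd, Pi.smul_apply]
      rw [Pi.single_eq_of_ne hv, smul_zero, add_zero]
      by_cases ha : G.Adj c v
      · have hpoly : Vp v c = (Vp c v).comp (-X) :=
          Polynomial.funext fun y => by simpa using hsym c v ha y
        have hm : v ∈ Tset G c := by simp [Tset, ha]
        rw [nbrFam, if_pos hm, if_pos ha.symm, ft, xv, eval_adjRep, hpoly]
        simp [derivative_comp]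
      · have hm : v ∉ Tset G c := by simp [Tset, ha]
        rw [nbrFam, if_neg hm, if_neg fun h => ha h.symm]
        simp

end Fields

/-- Lemma 4.12. Assume `c` is controllable and let `𝒯_i` be an
equivalence class of neighbors of `c` (the class of some `v₀ ∈ 𝒯`) with `𝒯_i ⊆ D^d`.
Then `∑_{v∈𝒯_i} ∂_{p_v} ∈ 𝓜` and `∑_{v∈𝒯_i} x_v ∂_{p_v} ∈ 𝓜`. -/
theorem top_degree_class_mem
    {V : Type} [Fintype V] [DecidableEq V] (G : SimpleGraph V) [DecidableRel G.Adj]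
    (Vstar : Finset V) (γ : V → ℝ) (U : V → ℝ → ℝ) (Vp : V → V → Polynomial ℝ)
    (hγpos : ∀ v ∈ Vstar, 0 < γ v) (hγ0 : ∀ v ∉ Vstar, γ v = 0)
    (hU : ∀ v, ContDiff ℝ (⊤ : ℕ∞) (U v))
    (hsym : ∀ u v, G.Adj u v → ∀ x : ℝ, (Vp v u).eval x = (Vp u v).eval (-x))
    (hdeg : ∀ u v, G.Adj u v → 3 ≤ (Vp u v).natDegree)
    (c : V) (hc : Controllable Vstar (X0 G γ U Vp) c)
    (v₀ : V) (hv₀ : v₀ ∈ Tset G c)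
    (hsub : ((Tset G c).filter fun w =>
        PolyEquiv (derivative (derivative (Vp c w))) (derivative (derivative (Vp c v₀))))
      ⊆ Dd G Vp c) :
    MM Vstar (X0 G γ U Vp)
      (dpSum ((Tset G c).filter fun w =>
        PolyEquiv (derivative (derivative (Vp c w))) (derivative (derivative (Vp c v₀))))) ∧
    MM Vstar (X0 G γ U Vp)
      (fun x => ((0 : V → ℝ),
        ∑ v ∈ (Tset G c).filter (fun w =>
          PolyEquiv (derivative (derivative (Vp c w))) (derivative (derivative (Vp c v₀)))),
          Pi.single v (xv Vp c v x))) := by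
  set C := (Tset G c).filter fun w =>
    PolyEquiv (derivative (derivative (Vp c w))) (derivative (derivative (Vp c v₀))) with hCdef
  have hN := derClosed_famMem G Vstar γ U Vp c hU hc
  have hdeg1 : ∀ v ∈ Tset G c, 1 ≤ (derivative (derivative (Vp c v))).natDegree := by
    intro v hv
    have h3 := hdeg c v (by simpa [Tset] using hv)
    rw [natDegree_derivative, natDegree_derivative]
    omega
  have hftdeg : ∀ v, (ft Vp c v).natDegree = (derivative (derivative (Vp c v))).natDegree :=
    fun v => natDegree_adjRep _
  have hv₀C : v₀ ∈ C := Finset.mem_filter.2 ⟨hv₀, 0, by simp⟩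
  have hv₀d : (ft Vp c v₀).natDegree = dmax G Vp c := (Finset.mem_filter.1 (hsub hv₀C)).2
  obtain ⟨d, hd⟩ : ∃ d, dmax G Vp c = d + 1 :=
    ⟨dmax G Vp c - 1, by have := hdeg1 v₀ hv₀; rw [← hftdeg, hv₀d] at this; omega⟩
  have hF₀ : nbrFam G Vp c v₀ = ft Vp c v₀ := if_pos hv₀
  have hle : ∀ v, (nbrFam G Vp c v).natDegree ≤ d + 1 := by
    intro v
    rw [← hd, nbrFam]
    split_ifs with hv
    · exact Finset.le_sup (f := fun v => (ft Vp c v).natDegree) hv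
    · simp
  have hadj : ∀ v, (nbrFam G Vp c v).coeff (d + 1) ≠ 0 → (nbrFam G Vp c v).coeff d = 0 := by
    intro v hv
    have hdv : (nbrFam G Vp c v).natDegree = d + 1 :=
      le_antisymm (hle v) (le_natDegree_of_ne_zero hv)
    by_cases hvT : v ∈ Tset G c
    · rw [nbrFam, if_pos hvT] at hdv ⊢
      have := coeff_pred_adjRep _ (hdeg1 v hvT)
      rw [← hftdeg, hdv] at this
      exact this
    · simp [nbrFam, hvT]
  have hlead : (nbrFam G Vp c v₀).coeff (d + 1) ≠ 0 := by
    rw [hF₀, ← hd, ← hv₀d, coeff_natDegree, leadingCoeff_ne_zero]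
    intro h
    rw [h] at hv₀d
    simp [hd] at hv₀d
  have hC : ∀ v, v ∈ C ↔ nbrFam G Vp c v = nbrFam G Vp c v₀ := by
    intro v
    rw [hF₀, hCdef, Finset.mem_filter, polyEquiv_iff _ _ (hdeg1 v₀ hv₀)]
    by_cases hv : v ∈ Tset G c
    · simp [hv, nbrFam, ft]
    · simp only [hv, false_and, nbrFam, if_false, false_iff]
      intro h
      rw [hF₀, ← h] at hlead
      simp at hlead
  have key := hN.class_mem (famMem_nbrFam G Vstar γ U Vp c hU hsym hc) hle hadj v₀ hlead C hC
  have hsum : ∀ f : V → ℝ, (∑ v ∈ C, Pi.single v (f v) : V → ℝ) =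
      fun v => if v ∈ C then f v else 0 := by
    intro f
    funext v
    simp [Finset.sum_apply, Pi.single_apply]
  constructor
  · convert (hN.monoFam_pred key).2 using 1
    funext x
    rw [dpSum, hsum]
    simp [famField, monoFam, apply_ite]
  · convert key.2 using 1
    funext x
    rw [hsum]
    simp [famField, monoFam]
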